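/- arXiv:2504.08043 — 7 statements merged into one kernel-verified Lean document; each statement's English description precedes it below -/
import Mathlib

section
/- Let D ≥ 2, let q_1 < q_2 < ⋯ < q_L be pairwise coprime positive integers with q_1 > 1, and let σ_1, …, σ_d (1 ≤ d ≤ D) be permutations of {1,…,D} whose last values σ_1(D), …, σ_d(D) are pairwise distinct. Then the d·L matrices M(q_i, σ_j), for 1 ≤ i ≤ L and 1 ≤ j ≤ d, are pairwise left coprime: any two distinct matrices in this family are left coprime. -/
/-- The `D × D` integer matrix `M(q, σ)`: diagonal entries all `q`, entry
`(σ(k), σ(k+1))` equal to `1` for `k = 1, …, D-1`, all other entries `0`. -/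
def Mmat {D : ℕ} (q : ℤ) (σ : Equiv.Perm (Fin D)) : Matrix (Fin D) (Fin D) ℤ :=
  Matrix.diagonal (fun _ => q) +
    ∑ k : Fin (D - 1),
      Matrix.single (σ ⟨(k : ℕ), by have := k.isLt; omega⟩)
        (σ ⟨(k : ℕ) + 1, by have := k.isLt; omega⟩) (1 : ℤ)

/-- Two square integer matrices are left coprime if every common left divisor of
them is unimodular. -/
def LeftCoprime {D : ℕ} (M N : Matrix (Fin D) (Fin D) ℤ) : Prop :=
  ∀ A : Matrix (Fin D) (Fin D) ℤ, A.det ≠ 0 →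
    (∃ B, M = A * B) → (∃ C, N = A * C) → (A.det = 1 ∨ A.det = -1)

/-- `A` is a right multiple of `M` if `A = M * P` for some nonsingular integer
matrix `P`. -/
def IsRightMultiple {D : ℕ} (A M : Matrix (Fin D) (Fin D) ℤ) : Prop :=
  ∃ P : Matrix (Fin D) (Fin D) ℤ, P.det ≠ 0 ∧ A = M * P

/-!
Reordering rows and columns by `σ` makes `M(q, σ)` upper bidiagonal, so its determinant is `q ^ D`.
A common left divisor of `M(q, σ)` and `M(r, τ)` has determinant dividing `q ^ D` and `r ^ D`, hence
is unimodular if `q` and `r` are coprime. In general, a non-unimodular common left divisor is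
singular modulo some prime `p`, so that the two matrices share a nonzero left null vector over
`ZMod p`. Then `p` divides `q` and `r`, and dropping the diagonals shows that this vector is
supported at the last value of `σ` and at that of `τ`, which is impossible if these differ.
-/

open Matrix

theorem exists_prime_vecMul_map_intCast_eq_zero {n : Type*} [Fintype n] [DecidableEq n]
    {A : Matrix n n ℤ} (hA : ¬IsUnit A.det) :
    ∃ (p : ℕ) (_ : Fact p.Prime) (v : n → ZMod p),
      v ≠ 0 ∧ v ᵥ* A.map (Int.cast : ℤ → ZMod p) = 0 := by
  obtain ⟨p, hp, hpA⟩ := Nat.exists_prime_and_dvd (mt Int.isUnit_iff_natAbs_eq.mpr hA)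
  have : Fact p.Prime := ⟨hp⟩
  have hdet : (A.map (Int.cast : ℤ → ZMod p)).det = 0 := by
    rw [← Int.cast_det, ZMod.intCast_zmod_eq_zero_iff_dvd]
    exact Int.natCast_dvd.mpr hpA
  exact ⟨p, this, exists_vecMul_eq_zero_iff.mpr hdet⟩

section LeftCoprime

variable {D : ℕ} {M N : Matrix (Fin D) (Fin D) ℤ}

theorem leftCoprime_of_isCoprime_det (h : IsCoprime M.det N.det) : LeftCoprime M N := by
  rintro A - ⟨B, rfl⟩ ⟨C, rfl⟩
  rw [det_mul, det_mul] at h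
  exact Int.isUnit_iff.mp (h.isUnit_of_dvd' (dvd_mul_right _ _) (dvd_mul_right _ _))

theorem leftCoprime_of_forall_prime
    (h : ∀ (p : ℕ) [Fact p.Prime] (v : Fin D → ZMod p),
      v ᵥ* M.map (Int.cast : ℤ → ZMod p) = 0 → v ᵥ* N.map (Int.cast : ℤ → ZMod p) = 0 → v = 0) :
    LeftCoprime M N := by
  rintro A - ⟨B, rfl⟩ ⟨C, rfl⟩
  rw [← Int.isUnit_iff]
  by_contra hA
  obtain ⟨p, _, v, hv, hvA⟩ := exists_prime_vecMul_map_intCast_eq_zero hA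
  have vecMul_mul_eq_zero (B : Matrix (Fin D) (Fin D) ℤ) :
      v ᵥ* (A * B).map (Int.cast : ℤ → ZMod p) = 0 := by
    rw [map_mul_intCast, ← vecMul_vecMul, hvA, zero_vecMul]
  exact hv (h p v (vecMul_mul_eq_zero B) (vecMul_mul_eq_zero C))

end LeftCoprime

section Mmat

variable {D : ℕ} (q : ℤ) (σ : Equiv.Perm (Fin D))

theorem Mmat_apply_apply (a b : Fin D) :
    Mmat q σ (σ a) (σ b) = (if a = b then q else 0) + if (a : ℕ) + 1 = b then 1 else 0 := by
  simp only [Mmat, Matrix.add_apply, diagonal_apply, Matrix.sum_apply, single_apply,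
    EmbeddingLike.apply_eq_iff_eq]
  congr 1
  by_cases hab : (a : ℕ) + 1 = b
  · rw [if_pos hab, Finset.sum_eq_single ⟨a, by omega⟩]
    · exact if_pos ⟨rfl, Fin.ext hab⟩
    · refine fun k _ hka => if_neg ?_
      rintro ⟨rfl, -⟩
      exact hka rfl
    · simp
  · rw [if_neg hab]
    refine Finset.sum_eq_zero fun k _ => if_neg ?_
    rintro ⟨rfl, rfl⟩
    exact hab rfl

theorem det_Mmat : (Mmat q σ).det = q ^ D := by
  have upperTriangular : ((Mmat q σ).submatrix σ σ).IsUpperTriangular := by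
    intro a b (hba : b < a)
    rw [submatrix_apply, Mmat_apply_apply, if_neg hba.ne', if_neg (by omega), add_zero]
  rw [← det_submatrix_equiv_self σ, det_of_isUpperTriangular upperTriangular]
  simp [Mmat_apply_apply]

variable {q σ} {R : Type*} {v : Fin D → R}

theorem vecMul_Mmat_apply_of_succ_eq [Ring R] {a b : Fin D} (hab : (a : ℕ) + 1 = b) :
    (v ᵥ* (Mmat q σ).map (Int.cast : ℤ → R)) (σ b) = v (σ b) * q + v (σ a) := by
  have succ_eq_iff (c : Fin D) : (c : ℕ) + 1 = b ↔ c = a := by omega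
  simp only [vecMul, dotProduct, map_apply]
  rw [← Equiv.sum_comp σ]
  simp [Mmat_apply_apply, succ_eq_iff, mul_add, Finset.sum_add_distrib]

theorem apply_eq_zero_of_vecMul_Mmat_eq_zero [CommRing R] [IsDomain R]
    (hv : v ᵥ* (Mmat q σ).map (Int.cast : ℤ → R) = 0) {x : Fin D}
    (hx : x ≠ σ ⟨D - 1, Nat.sub_one_lt_of_lt x.isLt⟩) : v x = 0 := by
  by_cases hq : (q : R) = 0
  · obtain ⟨a, rfl⟩ := σ.surjective x
    have ha : (a : ℕ) ≠ D - 1 := fun h => hx (congrArg σ (Fin.ext h))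
    have hcol := vecMul_Mmat_apply_of_succ_eq (q := q) (σ := σ) (v := v) (a := a)
      (b := ⟨a + 1, by omega⟩) rfl
    simpa [hv, hq] using hcol.symm
  · have hdet : ((Mmat q σ).map (Int.cast : ℤ → R)).det ≠ 0 := by
      rw [← Int.cast_det, det_Mmat, Int.cast_pow]
      exact pow_ne_zero D hq
    exact congrFun (eq_zero_of_vecMul_eq_zero hdet hv) x

end Mmat

theorem stmt_1_general {D : ℕ} (hD : 0 < D) {q r : ℤ} {σ τ : Equiv.Perm (Fin D)}
    (h : IsCoprime q r ∨ σ ⟨D - 1, by omega⟩ ≠ τ ⟨D - 1, by omega⟩) :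
    LeftCoprime (Mmat q σ) (Mmat r τ) := by
  rcases h with hqr | hlast
  · refine leftCoprime_of_isCoprime_det ?_
    rw [det_Mmat, det_Mmat]
    exact hqr.pow
  · refine leftCoprime_of_forall_prime fun p _ v hM hN => funext fun x => ?_
    by_cases hx : x = σ ⟨D - 1, by omega⟩
    · exact apply_eq_zero_of_vecMul_Mmat_eq_zero hN (hx ▸ hlast)
    · exact apply_eq_zero_of_vecMul_Mmat_eq_zero hM hx

/-- for pairwise coprime positive integers `q_1 < ⋯ < q_L` with
`q_1 > 1` and permutations `σ_1, …, σ_d` (`1 ≤ d ≤ D`) with pairwise distinct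
last values, the `d·L` matrices `M(q_i, σ_j)` are pairwise left coprime. -/
theorem stmt_1 (D L d : ℕ) (hD : 2 ≤ D) (hL : 1 ≤ L) (hd1 : 1 ≤ d) (hdD : d ≤ D)
    (q : Fin L → ℤ) (hmono : StrictMono q) (hpos : ∀ i, 0 < q i)
    (hq1 : 1 < q ⟨0, hL⟩)
    (hcop : ∀ i i' : Fin L, i ≠ i' → IsCoprime (q i) (q i'))
    (σ : Fin d → Equiv.Perm (Fin D))
    (hlast : ∀ j j' : Fin d, j ≠ j' →
      σ j ⟨D - 1, by omega⟩ ≠ σ j' ⟨D - 1, by omega⟩) :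
    ∀ (i i' : Fin L) (j j' : Fin d), (i, j) ≠ (i', j') →
      LeftCoprime (Mmat (q i) (σ j)) (Mmat (q i') (σ j')) := by
  intro i i' j j' hne
  have hne' : i ≠ i' ∨ j ≠ j' := not_and_or.mp (mt Prod.mk_inj.mpr hne)
  exact stmt_1_general (by omega) (hne'.imp (hcop i i') (hlast j j'))
end

section
/- Let D ≥ 2, let q and q' be integers with q > 1 and q' > 1 (not necessarily distinct or coprime), and let σ and σ' be permutations of {1,…,D} whose last values differ, i.e., σ(D) ≠ σ'(D). Then the matrices M(q, σ) and M(q', σ') are left coprime. -/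
/-! Over any commutative ring, let `f` be a linear map that vanishes on the columns of `M(q, σ)`,
and let `e` be the standard basis. Column `σ(k+1)` gives `f (e (σ k)) = -q • f (e (σ (k+1)))` and
column `σ(1)` gives `q • f (e (σ 1)) = 0`, so with `w = f (e (σ D))` every `f (e (σ k))` is
`(-q) ^ (D - k) • w`, and `(-q) ^ D • w = 0`. If `f` also vanishes on the columns of `M(q', σ')` and
`w' = f (e (σ' D))`, then `σ D ≠ σ' D` makes `w` a multiple of `w'`, and `w'` a multiple of
`-q • w`. So `w` is fixed by a multiple of `-q`, which acts nilpotently on it, and `w = 0`. Hence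
`f = 0`. Applied to the quotient by the span of all these columns, this says that they span
everything, which is Bézout's identity. -/

theorem eq_zero_of_pow_smul_eq_zero_of_mul_smul_eq {R Q : Type*} [CommMonoid R] [AddMonoid Q]
    [DistribMulAction R Q] {a r : R} {w : Q} {m : ℕ} (hnil : a ^ m • w = 0)
    (hfix : (r * a) • w = w) : w = 0 := by
  have hfix_pow : (r * a) ^ m • w = w :=
    pow_mem (S := MulAction.stabilizerSubmonoid R w) hfix m
  rw [← hfix_pow, mul_pow, mul_smul, hnil, smul_zero]

section ChainMatrix

open Matrix

variable {R ι : Type*} [CommRing R] [DecidableEq ι] {n : ℕ}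

/-- The matrix `M(q, σ)` over a commutative ring, its rows and columns indexed by any type `ι` that
`σ` enumerates; positions are counted from `0`. For `R = ℤ` and `ι = Fin (n + 1)` it unfolds to
`Mmat q σ`. -/
def chainMatrix (q : R) (σ : Fin (n + 1) ≃ ι) : Matrix ι ι R :=
  diagonal (fun _ => q) + ∑ k : Fin n, single (σ k.castSucc) (σ k.succ) 1

variable [Fintype ι]

theorem chainMatrix_mulVec (q : R) (σ : Fin (n + 1) ≃ ι) (v : ι → R) :
    chainMatrix q σ *ᵥ v = q • v + ∑ k : Fin n, Pi.single (σ k.castSucc) (v (σ k.succ)) := by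
  simp [chainMatrix, add_mulVec, sum_mulVec, single_mulVec, Pi.single]

theorem chainMatrix_mulVec_single_zero (q : R) (σ : Fin (n + 1) ≃ ι) :
    chainMatrix q σ *ᵥ Pi.single (σ 0) 1 = q • Pi.single (σ 0) 1 := by
  rw [chainMatrix_mulVec]
  simp

theorem chainMatrix_mulVec_single_succ (q : R) (σ : Fin (n + 1) ≃ ι) (k : Fin n) :
    chainMatrix q σ *ᵥ Pi.single (σ k.succ) 1 =
      q • Pi.single (σ k.succ) 1 + Pi.single (σ k.castSucc) 1 := by
  rw [chainMatrix_mulVec, Finset.sum_eq_single_of_mem k (Finset.mem_univ k), Pi.single_eq_same]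
  intro j _ hjk
  simp [hjk]

variable {Q : Type*} [AddCommGroup Q] [Module R Q] {q q' : R} {σ σ' : Fin (n + 1) ≃ ι}
  {f : (ι → R) →ₗ[R] Q}

theorem map_single_eq_neg_pow_rev_smul (hf : ∀ v, f (chainMatrix q σ *ᵥ v) = 0)
    (k : Fin (n + 1)) :
    f (Pi.single (σ k) 1) = (-q) ^ (k.rev : ℕ) • f (Pi.single (σ (Fin.last n)) 1) := by
  induction k using Fin.reverseInduction with
  | last => simp
  | cast k ih =>
    have hcol : q • f (Pi.single (σ k.succ) 1) + f (Pi.single (σ k.castSucc) 1) = 0 := by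
      rw [← map_smul, ← map_add, ← chainMatrix_mulVec_single_succ, hf]
    rw [eq_neg_of_add_eq_zero_right hcol, ih, Fin.rev_succ, Fin.rev_castSucc, Fin.val_castSucc,
      Fin.val_succ, pow_succ', mul_smul, neg_smul]

theorem neg_pow_smul_map_single_last_eq_zero (hf : ∀ v, f (chainMatrix q σ *ᵥ v) = 0) :
    (-q) ^ (n + 1) • f (Pi.single (σ (Fin.last n)) 1) = 0 := by
  have hcol : q • f (Pi.single (σ 0) 1) = 0 := by
    rw [← map_smul, ← chainMatrix_mulVec_single_zero, hf]
  have hzero := map_single_eq_neg_pow_rev_smul hf 0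
  rw [Fin.rev_zero, Fin.val_last] at hzero
  rw [pow_succ', mul_smul, ← hzero, neg_smul, hcol, neg_zero]

theorem exists_map_single_eq_mul_neg_smul (hf : ∀ v, f (chainMatrix q σ *ᵥ v) = 0) {i : ι}
    (hi : i ≠ σ (Fin.last n)) :
    ∃ r : R, f (Pi.single i 1) = (r * -q) • f (Pi.single (σ (Fin.last n)) 1) := by
  obtain ⟨k, rfl⟩ := σ.surjective i
  obtain ⟨j, rfl⟩ := Fin.exists_castSucc_eq.2 fun h => hi (congrArg σ h)
  refine ⟨(-q) ^ (j.rev : ℕ), ?_⟩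
  rw [map_single_eq_neg_pow_rev_smul hf, Fin.rev_castSucc, Fin.val_succ, pow_succ]

theorem map_single_last_eq_zero (hlast : σ (Fin.last n) ≠ σ' (Fin.last n))
    (hf : ∀ v, f (chainMatrix q σ *ᵥ v) = 0) (hf' : ∀ v, f (chainMatrix q' σ' *ᵥ v) = 0) :
    f (Pi.single (σ (Fin.last n)) 1) = 0 := by
  obtain ⟨r, hr⟩ := exists_map_single_eq_mul_neg_smul hf hlast.symm
  obtain ⟨r', hr'⟩ := exists_map_single_eq_mul_neg_smul hf' hlast
  refine eq_zero_of_pow_smul_eq_zero_of_mul_smul_eq (r := r' * -q' * r)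
    (neg_pow_smul_map_single_last_eq_zero hf) ?_
  rw [mul_assoc, mul_smul, ← hr, ← hr']

theorem eq_zero_of_map_chainMatrix_mulVec_eq_zero
    (hlast : σ (Fin.last n) ≠ σ' (Fin.last n))
    (hf : ∀ v, f (chainMatrix q σ *ᵥ v) = 0) (hf' : ∀ v, f (chainMatrix q' σ' *ᵥ v) = 0) :
    f = 0 := by
  refine LinearMap.pi_ext' fun i => LinearMap.ext_ring ?_
  obtain ⟨k, rfl⟩ := σ.surjective i
  change f (Pi.single (σ k) 1) = 0
  rw [map_single_eq_neg_pow_rev_smul hf, map_single_last_eq_zero hlast hf hf', smul_zero]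

theorem fromCols_chainMatrix_mulVec_surjective (q q' : R)
    (hlast : σ (Fin.last n) ≠ σ' (Fin.last n)) :
    Function.Surjective (fromCols (chainMatrix q σ) (chainMatrix q' σ')).mulVec := by
  set P := fromCols (chainMatrix q σ) (chainMatrix q' σ')
  have hmkQ (v w : ι → R) : P.mulVecLin.range.mkQ
      (chainMatrix q σ *ᵥ v + chainMatrix q' σ' *ᵥ w) = 0 :=
    (Submodule.Quotient.mk_eq_zero _).2 ⟨Sum.elim v w, by simp [P, fromCols_mulVec]⟩
  refine LinearMap.range_eq_top (f := P.mulVecLin).1 ?_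
  rw [← Submodule.ker_mkQ P.mulVecLin.range, LinearMap.ker_eq_top]
  refine eq_zero_of_map_chainMatrix_mulVec_eq_zero (q := q) (q' := q') hlast
    (fun v => ?_) (fun w => ?_)
  · simpa only [mulVec_zero, add_zero] using hmkQ v 0
  · simpa only [mulVec_zero, zero_add] using hmkQ 0 w

theorem stmt_3_general (q q' : R) (hlast : σ (Fin.last n) ≠ σ' (Fin.last n)) :
    ∃ X Y : Matrix ι ι R, chainMatrix q σ * X + chainMatrix q' σ' * Y = 1 := by
  obtain ⟨Z, hZ⟩ := mulVec_surjective_iff_exists_right_inverse.1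
    (fromCols_chainMatrix_mulVec_surjective q q' hlast)
  refine ⟨Z.toRows₁, Z.toRows₂, ?_⟩
  rw [← fromCols_mul_fromRows, fromRows_toRows, hZ]

end ChainMatrix

theorem LeftCoprime.of_exists_mul_add_mul_eq_one {D : ℕ} {M N : Matrix (Fin D) (Fin D) ℤ}
    (h : ∃ X Y, M * X + N * Y = 1) : LeftCoprime M N := by
  rintro A - ⟨B, rfl⟩ ⟨C, rfl⟩
  obtain ⟨X, Y, hXY⟩ := h
  have hinv : A * (B * X + C * Y) = 1 := by rw [mul_add, ← mul_assoc, ← mul_assoc, hXY]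
  exact Int.isUnit_iff.1 (Matrix.isUnit_det_of_right_inverse hinv)

/-- for any `q, q' > 1` and permutations `σ, σ'` with different last
values `σ(D) ≠ σ'(D)`, the matrices `M(q, σ)` and `M(q', σ')` are left coprime. -/
theorem stmt_3 (D : ℕ) (hD : 2 ≤ D) (q q' : ℤ) (hq : 1 < q) (hq' : 1 < q')
    (σ σ' : Equiv.Perm (Fin D))
    (hlast : σ ⟨D - 1, by omega⟩ ≠ σ' ⟨D - 1, by omega⟩) :
    LeftCoprime (Mmat q σ) (Mmat q' σ') := by
  obtain ⟨n, rfl⟩ := Nat.exists_eq_add_of_le' (one_le_two.trans hD)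
  exact .of_exists_mul_add_mul_eq_one (stmt_3_general q q' hlast)
end

section
/- Let D ≥ 2, let q_1 < q_2 < ⋯ < q_L be pairwise coprime positive integers with q_1 > 1, and let σ_1, …, σ_d (1 ≤ d ≤ D) be permutations of {1,…,D} whose last values σ_1(D), …, σ_d(D) are pairwise distinct. For each pair (i,j) with 1 ≤ i ≤ L and 1 ≤ j ≤ d, let ε_{i,j} : {1,…,D}×{1,…,D} → {+1, −1} be an arbitrary sign pattern, and let M'_{i,j} be the D×D integer matrix whose (a,b) entry equals ε_{i,j}(a,b) times the (a,b) entry of M(q_i, σ_j). Then the matrices M'_{i,j}, for 1 ≤ i ≤ L and 1 ≤ j ≤ d, are pairwise left coprime. -/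
/-!
In the basis ordered by `σ`, each matrix is upper bidiagonal with diagonal `q` and superdiagonal
`1`, up to units. Its determinant is therefore a unit times `q ^ D`, so the right ideal `{M * X}` it
generates contains `q ^ D • 1`, by Cramer's rule. Two matrices with coprime `q` and `q'` are then
left coprime at once.

When `q = q'`, the columns of the first matrix span, modulo `q`, every basis vector except the last
one in its order. If the second matrix has a different last vector, the two together span all of
them, so the right ideal they generate contains some `1 - q • Z`, hence also `1 - (q • Z) ^ D`. As
it contains `(q • Z) ^ D`, it contains `1`.

This gives a Bézout identity `M * X + N * Y = 1` over any commutative ring, with arbitrary units in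
place of the signs.
-/

open Matrix

section BezoutIdentities

theorem exists_mul_add_mul_eq_one_of_mul_eq_pow {A : Type*} [Ring A] {a b x y t c : A} {k : ℕ}
    (hxy : a * x + b * y + t = 1) (hc : a * c = t ^ k) : ∃ x' y', a * x' + b * y' = 1 := by
  let s := ∑ i ∈ Finset.range k, t ^ i
  refine ⟨x * s + c, y * s, ?_⟩
  calc a * (x * s + c) + b * (y * s)
      = (a * x + b * y) * s + a * c := by noncomm_ring
    _ = (1 - t) * s + t ^ k := by rw [eq_sub_of_add_eq hxy, hc]
    _ = 1 := by rw [mul_neg_geom_sum, sub_add_cancel]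

variable {m R : Type*} [Fintype m] [DecidableEq m] [CommRing R]

theorem exists_mul_add_mul_eq_one_of_isCoprime_det {M N : Matrix m m R}
    (h : IsCoprime M.det N.det) : ∃ X Y, M * X + N * Y = 1 := by
  obtain ⟨a, b, hab⟩ := h
  refine ⟨a • M.adjugate, b • N.adjugate, ?_⟩
  rw [Matrix.mul_smul, Matrix.mul_smul, mul_adjugate, mul_adjugate, smul_smul, smul_smul,
    ← add_smul, hab, one_smul]

end BezoutIdentities

/-- The matrix `M` is upper bidiagonal in the order `σ 0, …, σ n` of its index type, with diagonal
entries equal to `q` up to units and with units on the superdiagonal. This is the shape of `M(q, σ)`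
after multiplying its entries by arbitrary units. -/
structure IsUnitBidiagonal {m R : Type*} [CommRing R] {n : ℕ} (q : R) (σ : Fin (n + 1) ≃ m)
    (M : Matrix m m R) : Prop where
  associated_diag : ∀ k, Associated q (M (σ k) (σ k))
  isUnit_superdiag : ∀ k : Fin n, IsUnit (M (σ k.castSucc) (σ k.succ))
  eq_zero : ∀ k l : Fin (n + 1), k ≠ l → (k : ℕ) + 1 ≠ l → M (σ k) (σ l) = 0

namespace IsUnitBidiagonal

variable {m R : Type*} [CommRing R] {n : ℕ} {q q' : R} {σ τ : Fin (n + 1) ≃ m} {M N : Matrix m m R}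

theorem hadamard_of_isUnit {E : Matrix m m R} (hE : ∀ a b, IsUnit (E a b))
    (hM : IsUnitBidiagonal q σ M) : IsUnitBidiagonal q σ (E ⊙ M) where
  associated_diag k :=
    (hM.associated_diag k).trans (associated_isUnit_mul_right_iff (hE _ _) |>.2 (.refl _))
  isUnit_superdiag k := (hE _ _).mul (hM.isUnit_superdiag k)
  eq_zero k l hkl hkl' := by rw [hadamard_apply, hM.eq_zero k l hkl hkl', mul_zero]

variable [DecidableEq m]

theorem col_succ (hM : IsUnitBidiagonal q σ M) (k : Fin n) :
    M.col (σ k.succ) = Pi.single (σ k.castSucc) (M (σ k.castSucc) (σ k.succ)) +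
      Pi.single (σ k.succ) (M (σ k.succ) (σ k.succ)) := by
  ext a
  obtain ⟨l, rfl⟩ := σ.surjective a
  have hne : k.castSucc ≠ k.succ := k.castSucc_lt_succ.ne
  by_cases hl : l = k.succ
  · simp [hl, hne.symm]
  · by_cases hl' : l = k.castSucc
    · simp [hl', hne]
    · simp [hl, hl', hM.eq_zero l k.succ hl (by simpa [Fin.ext_iff] using hl')]

variable [Fintype m]

theorem associated_pow_det (hM : IsUnitBidiagonal q σ M) : Associated (q ^ (n + 1)) M.det := by
  have hupper : (M.submatrix σ σ).BlockTriangular id := fun k l (hlk : l < k) =>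
    hM.eq_zero k l hlk.ne' (by omega)
  rw [← det_submatrix_equiv_self σ, det_of_isUpperTriangular hupper]
  simpa using Associated.prod Finset.univ _ _ fun k _ => hM.associated_diag k

theorem exists_mul_eq_pow_smul_one (hM : IsUnitBidiagonal q σ M) :
    ∃ X, M * X = q ^ (n + 1) • (1 : Matrix m m R) := by
  obtain ⟨u, hu⟩ := hM.associated_pow_det.symm
  exact ⟨(u : R) • M.adjugate, by rw [Matrix.mul_smul, mul_adjugate, smul_smul, mul_comm, hu]⟩

theorem exists_mulVec_add_smul_eq_single (hM : IsUnitBidiagonal q σ M) {a : m}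
    (ha : a ≠ σ (Fin.last n)) : ∃ x z : m → R, M *ᵥ x + q • z = Pi.single a 1 := by
  obtain ⟨l, rfl⟩ := σ.surjective a
  obtain ⟨k, rfl⟩ := Fin.exists_castSucc_eq.2 (ne_of_apply_ne σ ha)
  obtain ⟨u, hu⟩ := hM.isUnit_superdiag k
  obtain ⟨c, hc⟩ := (hM.associated_diag k.succ).dvd
  refine ⟨Pi.single (σ k.succ) ↑u⁻¹, -Pi.single (σ k.succ) (c * ↑u⁻¹), ?_⟩
  rw [mulVec_single, hM.col_succ, ← hu, hc]
  simp [← Pi.single_smul', mul_assoc]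

theorem exists_mulVec_add_mulVec_add_smul_eq_single (hM : IsUnitBidiagonal q σ M)
    (hN : IsUnitBidiagonal q τ N) (hlast : σ (Fin.last n) ≠ τ (Fin.last n)) (a : m) :
    ∃ x y z : m → R, M *ᵥ x + N *ᵥ y + q • z = Pi.single a 1 := by
  by_cases ha : a = σ (Fin.last n)
  · obtain ⟨y, z, hyz⟩ := hN.exists_mulVec_add_smul_eq_single (ha ▸ hlast)
    exact ⟨0, y, z, by simpa using hyz⟩
  · obtain ⟨x, z, hxz⟩ := hM.exists_mulVec_add_smul_eq_single ha
    exact ⟨x, 0, z, by simpa using hxz⟩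

theorem exists_mul_add_mul_eq_one_of_last_ne (hM : IsUnitBidiagonal q σ M)
    (hN : IsUnitBidiagonal q τ N) (hlast : σ (Fin.last n) ≠ τ (Fin.last n)) :
    ∃ X Y, M * X + N * Y = 1 := by
  choose x y z hxyz using hM.exists_mulVec_add_mulVec_add_smul_eq_single hN hlast
  have hbezout : M * (of x)ᵀ + N * (of y)ᵀ + q • (of z)ᵀ = 1 := by
    ext a b
    simpa [Matrix.one_apply, Pi.single_apply, Matrix.mul_apply, mulVec, dotProduct] using
      congrFun (hxyz b) a
  obtain ⟨C, hC⟩ := hM.exists_mul_eq_pow_smul_one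
  have hpow : M * (C * (of z)ᵀ ^ (n + 1)) = (q • (of z)ᵀ) ^ (n + 1) := by
    rw [← mul_assoc, hC, smul_mul_assoc, one_mul, smul_pow]
  exact exists_mul_add_mul_eq_one_of_mul_eq_pow hbezout hpow

theorem exists_mul_add_mul_eq_one_of_isCoprime (hM : IsUnitBidiagonal q σ M)
    (hN : IsUnitBidiagonal q' τ N) (hq : IsCoprime q q') : ∃ X Y, M * X + N * Y = 1 := by
  have hpow : IsCoprime (q ^ (n + 1)) (q' ^ (n + 1)) := hq.pow
  exact exists_mul_add_mul_eq_one_of_isCoprime_det <|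
    (hpow.of_isCoprime_of_dvd_left hM.associated_pow_det.dvd').of_isCoprime_of_dvd_right
      hN.associated_pow_det.dvd'

end IsUnitBidiagonal

theorem Mmat_apply_perm {D : ℕ} (q : ℤ) (σ : Equiv.Perm (Fin D)) (x y : Fin D) :
    Mmat q σ (σ x) (σ y) =
      (if x = y then q else 0) + if (x : ℕ) + 1 = y then 1 else 0 := by
  rw [Mmat, Matrix.add_apply, diagonal_apply, Matrix.sum_apply]
  simp only [σ.injective.eq_iff, single_apply]
  congr 1
  split_ifs with h
  · rw [Finset.sum_eq_single ⟨(x : ℕ), by omega⟩]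
    · simp [h]
    · intro k _ hk
      simp only [ne_eq, Fin.ext_iff] at hk
      simp [Fin.ext_iff, hk]
    · simp
  · refine Finset.sum_eq_zero fun k _ => if_neg ?_
    rintro ⟨rfl, rfl⟩
    exact h rfl

theorem isUnitBidiagonal_Mmat {n : ℕ} (q : ℤ) (σ : Equiv.Perm (Fin (n + 1))) :
    IsUnitBidiagonal q σ (Mmat q σ) where
  associated_diag k := by simp [Mmat_apply_perm]
  isUnit_superdiag k := by simp [Mmat_apply_perm, Fin.ext_iff]
  eq_zero k l hkl hkl' := by simp [Mmat_apply_perm, hkl, hkl']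

theorem leftCoprime_of_mul_add_mul_eq_one {D : ℕ} {M N X Y : Matrix (Fin D) (Fin D) ℤ}
    (h : M * X + N * Y = 1) : LeftCoprime M N := by
  rintro A - ⟨B, rfl⟩ ⟨C, rfl⟩
  have hA : A * (B * X + C * Y) = 1 := by rw [mul_add, ← mul_assoc, ← mul_assoc, h]
  exact Int.isUnit_iff.1 (isUnit_det_of_right_inverse hA)

theorem stmt_4_general {m R ι κ : Type*} [Fintype m] [DecidableEq m] [CommRing R] {n : ℕ}
    {q : ι → R} (hcop : Pairwise fun i i' => IsCoprime (q i) (q i'))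
    {σ : κ → Fin (n + 1) ≃ m} (hlast : Function.Injective fun j => σ j (Fin.last n))
    {M : ι → κ → Matrix m m R} (hM : ∀ i j, IsUnitBidiagonal (q i) (σ j) (M i j))
    {i i' : ι} {j j' : κ} (hne : (i, j) ≠ (i', j')) :
    ∃ X Y, M i j * X + M i' j' * Y = 1 := by
  by_cases hi : i = i'
  · subst hi
    have hj : j ≠ j' := fun h => hne (h ▸ rfl)
    exact (hM i j).exists_mul_add_mul_eq_one_of_last_ne (hM i j') (hlast.ne hj)
  · exact (hM i j).exists_mul_add_mul_eq_one_of_isCoprime (hM i' j') (hcop hi)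

/-- changing the signs of arbitrary entries of the matrices
`M(q_i, σ_j)` preserves pairwise left coprimality. -/
theorem stmt_4 (D L d : ℕ) (hD : 2 ≤ D) (hL : 1 ≤ L) (hd1 : 1 ≤ d) (hdD : d ≤ D)
    (q : Fin L → ℤ) (hmono : StrictMono q) (hpos : ∀ i, 0 < q i)
    (hq1 : 1 < q ⟨0, hL⟩)
    (hcop : ∀ i i' : Fin L, i ≠ i' → IsCoprime (q i) (q i'))
    (σ : Fin d → Equiv.Perm (Fin D))
    (hlast : ∀ j j' : Fin d, j ≠ j' →
      σ j ⟨D - 1, by omega⟩ ≠ σ j' ⟨D - 1, by omega⟩)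
    (ε : Fin L → Fin d → Fin D → Fin D → ℤ)
    (hε : ∀ i j a b, ε i j a b = 1 ∨ ε i j a b = -1)
    (M' : Fin L → Fin d → Matrix (Fin D) (Fin D) ℤ)
    (hM' : ∀ i j a b, M' i j a b = ε i j a b * Mmat (q i) (σ j) a b) :
    ∀ (i i' : Fin L) (j j' : Fin d), (i, j) ≠ (i', j') →
      LeftCoprime (M' i j) (M' i' j') := by
  obtain ⟨n, rfl⟩ : ∃ n, D = n + 1 := ⟨D - 1, by omega⟩
  have hM (i j) : IsUnitBidiagonal (q i) (σ j) (M' i j) := by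
    have hε' (a b) : IsUnit (of (ε i j) a b) := Int.isUnit_iff.2 (hε i j a b)
    convert (isUnitBidiagonal_Mmat (q i) (σ j)).hadamard_of_isUnit hε'
    exact Matrix.ext (hM' i j)
  intro i i' j j' hne
  obtain ⟨X, Y, hXY⟩ := stmt_4_general (fun i i' => hcop i i')
    (fun j j' => not_imp_not.1 (hlast j j')) hM hne
  exact leftCoprime_of_mul_add_mul_eq_one hXY
end

section
/- Let q be an integer with q > 1, and set M1 = [[q, 0], [1, q]], M2 = [[q, 1], [0, q]], and L_q = [[−q⁴−q², q³], [−q³, q²]] (2×2 integer matrices). Then det L_q = −q⁴, L_q is a common right multiple of M1 and M2 (i.e., there exist nonsingular 2×2 integer matrices P1 and P2 with L_q = M1·P1 = M2·P2), and L_q is a least common right multiple of M1 and M2: every nonsingular 2×2 integer matrix that is a common right multiple of M1 and M2 is a right multiple of L_q. -/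
/-!
Write the two factorizations as `L = M₁ * P₁ = M₂ * P₂`. The cofactors satisfy a Bézout identity
`U * P₁ + V * P₂ = 1`. If `R = M₁ * A = M₂ * C`, then `X = L⁻¹ * R`, a priori a matrix of fractions,
satisfies `P₁ * X = A` and `P₂ * X = C`, so `X = U * A + V * C` is integral and `R = L * X`.
-/

-- `d` is a denominator of `l⁻¹ * r`, which makes it possible to argue without a ring of fractions.
theorem dvd_of_bezout_cofactors {A : Type*} [Semiring A] {l m₁ m₂ p₁ p₂ u v r d : A}
    (hm₁ : IsLeftRegular m₁) (hm₂ : IsLeftRegular m₂) (hl₁ : l = m₁ * p₁) (hl₂ : l = m₂ * p₂)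
    (hbezout : u * p₁ + v * p₂ = 1) (hd : IsRightRegular d) (hlr : l ∣ r * d)
    (hr₁ : m₁ ∣ r) (hr₂ : m₂ ∣ r) : l ∣ r := by
  obtain ⟨y, hy⟩ := hlr
  obtain ⟨a, ha⟩ := hr₁
  obtain ⟨c, hc⟩ := hr₂
  have hp₁y : p₁ * y = a * d := hm₁ <| by
    simp only [← mul_assoc, ← hl₁, ← ha, hy]
  have hp₂y : p₂ * y = c * d := hm₂ <| by
    simp only [← mul_assoc, ← hl₂, ← hc, hy]
  have hy_eq : y = (u * a + v * c) * d := by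
    calc y = (u * p₁ + v * p₂) * y := by rw [hbezout, one_mul]
      _ = u * (p₁ * y) + v * (p₂ * y) := by simp only [add_mul, mul_assoc]
      _ = (u * a + v * c) * d := by simp only [hp₁y, hp₂y, add_mul, mul_assoc]
  exact ⟨u * a + v * c, hd <| by simp only [hy, hy_eq, mul_assoc]⟩

section CommRing

variable {n S : Type*} [Fintype n] [DecidableEq n] [CommRing S]

theorem matrix_dvd_mul_scalar_det (L R : Matrix n n S) : L ∣ R * Matrix.scalar n L.det :=
  ⟨L.adjugate * R, by
    rw [← mul_assoc, Matrix.mul_adjugate, Matrix.smul_mul, one_mul, Matrix.scalar_apply,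
      ← Matrix.smul_eq_mul_diagonal]⟩

theorem matrix_dvd_of_bezout_cofactors {L M₁ M₂ P₁ P₂ U V R : Matrix n n S}
    (hL : IsRegular L.det) (hL₁ : L = M₁ * P₁) (hL₂ : L = M₂ * P₂)
    (hbezout : U * P₁ + V * P₂ = 1) (hR₁ : M₁ ∣ R) (hR₂ : M₂ ∣ R) : L ∣ R := by
  have isLeftRegular_of_left_factor {M P : Matrix n n S} (h : L = M * P) : IsLeftRegular M := by
    rw [h, Matrix.det_mul] at hL
    exact (Matrix.isRegular_of_isLeftRegular_det hL.of_mul_left.left).left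
  have hdet : IsRightRegular (Matrix.scalar n L.det) := by
    refine (Matrix.isRegular_of_isLeftRegular_det ?_).right
    rw [Matrix.scalar_apply, Matrix.det_diagonal, Finset.prod_const]
    exact hL.left.pow _
  exact dvd_of_bezout_cofactors (isLeftRegular_of_left_factor hL₁)
    (isLeftRegular_of_left_factor hL₂) hL₁ hL₂ hbezout hdet (matrix_dvd_mul_scalar_det L R) hR₁ hR₂

theorem stmt_9_general {q : S} (hq : IsRegular q) :
    (!![-q ^ 4 - q ^ 2, q ^ 3; -q ^ 3, q ^ 2]).det = -q ^ 4 ∧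
    !![q, 0; 1, q] ∣ !![-q ^ 4 - q ^ 2, q ^ 3; -q ^ 3, q ^ 2] ∧
    !![q, 1; 0, q] ∣ !![-q ^ 4 - q ^ 2, q ^ 3; -q ^ 3, q ^ 2] ∧
    ∀ R : Matrix (Fin 2) (Fin 2) S, !![q, 0; 1, q] ∣ R → !![q, 1; 0, q] ∣ R →
      !![-q ^ 4 - q ^ 2, q ^ 3; -q ^ 3, q ^ 2] ∣ R := by
  have hdet : (!![-q ^ 4 - q ^ 2, q ^ 3; -q ^ 3, q ^ 2]).det = -q ^ 4 := by
    rw [Matrix.det_fin_two_of]; ring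
  have hdet_regular : IsRegular (!![-q ^ 4 - q ^ 2, q ^ 3; -q ^ 3, q ^ 2]).det := by
    rw [hdet, neg_eq_neg_one_mul]
    exact isUnit_neg_one.isRegular.mul (hq.pow 4)
  have hL₁ : !![-q ^ 4 - q ^ 2, q ^ 3; -q ^ 3, q ^ 2] =
      !![q, 0; 1, q] * !![-q ^ 3 - q, q ^ 2; 1, 0] := by
    rw [Matrix.mul_fin_two]; ring_nf
  have hL₂ : !![-q ^ 4 - q ^ 2, q ^ 3; -q ^ 3, q ^ 2] =
      !![q, 1; 0, q] * !![-q ^ 3, q ^ 2 - 1; -q ^ 2, q] := by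
    rw [Matrix.mul_fin_two]; ring_nf
  have hbezout : !![0, 1; 1, q] * !![-q ^ 3 - q, q ^ 2; 1, 0] +
      !![0, 0; -1, 0] * !![-q ^ 3, q ^ 2 - 1; -q ^ 2, q] = 1 := by
    simp [Matrix.one_fin_two]
  exact ⟨hdet, ⟨_, hL₁⟩, ⟨_, hL₂⟩,
    fun _ => matrix_dvd_of_bezout_cofactors hdet_regular hL₁ hL₂ hbezout⟩

end CommRing

theorem isRightMultiple_iff_dvd {D : ℕ} {A M : Matrix (Fin D) (Fin D) ℤ} (hA : A.det ≠ 0) :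
    IsRightMultiple A M ↔ M ∣ A := by
  refine ⟨fun ⟨P, _, hP⟩ => ⟨P, hP⟩, fun ⟨P, hP⟩ => ⟨P, ?_, hP⟩⟩
  rw [hP, Matrix.det_mul] at hA
  exact right_ne_zero_of_mul hA

theorem isRightMultiple_least_of_dvd_least {D : ℕ} {L M₁ M₂ : Matrix (Fin D) (Fin D) ℤ}
    (hL : L.det ≠ 0) (hlcm : M₁ ∣ L ∧ M₂ ∣ L ∧ ∀ R, M₁ ∣ R → M₂ ∣ R → L ∣ R) :
    IsRightMultiple L M₁ ∧ IsRightMultiple L M₂ ∧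
      ∀ R : Matrix (Fin D) (Fin D) ℤ, R.det ≠ 0 →
        IsRightMultiple R M₁ → IsRightMultiple R M₂ → IsRightMultiple R L := by
  obtain ⟨hM₁, hM₂, hleast⟩ := hlcm
  refine ⟨(isRightMultiple_iff_dvd hL).2 hM₁, (isRightMultiple_iff_dvd hL).2 hM₂, fun R hR => ?_⟩
  simpa only [isRightMultiple_iff_dvd hR] using hleast R

/-- for `q > 1`, `L_q = [[-q⁴-q², q³], [-q³, q²]]` has determinant
`-q⁴`, is a common right multiple of `M1 = [[q,0],[1,q]]` and `M2 = [[q,1],[0,q]]`,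
and is a least common right multiple of them. -/
theorem stmt_9 (q : ℤ) (hq : 1 < q) :
    (!![-q ^ 4 - q ^ 2, q ^ 3; -q ^ 3, q ^ 2]).det = -q ^ 4 ∧
    IsRightMultiple !![-q ^ 4 - q ^ 2, q ^ 3; -q ^ 3, q ^ 2] !![q, 0; 1, q] ∧
    IsRightMultiple !![-q ^ 4 - q ^ 2, q ^ 3; -q ^ 3, q ^ 2] !![q, 1; 0, q] ∧
    ∀ R : Matrix (Fin 2) (Fin 2) ℤ, R.det ≠ 0 →
      IsRightMultiple R !![q, 0; 1, q] → IsRightMultiple R !![q, 1; 0, q] →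
      IsRightMultiple R !![-q ^ 4 - q ^ 2, q ^ 3; -q ^ 3, q ^ 2] := by
  have hq0 : q ≠ 0 := by lia
  obtain ⟨hdet, hlcm⟩ := stmt_9_general (IsRegular.of_ne_zero hq0)
  exact ⟨hdet, isRightMultiple_least_of_dvd_least (by simp [hdet, hq0]) hlcm⟩
end

section
/- Let q be an integer with q > 1. Every nonsingular 2×2 integer matrix R that is a common right multiple of M1 = [[q, 0], [1, q]] and M2 = [[q, 1], [0, q]] satisfies q⁴ ∣ det R; in particular |det R| ≥ q⁴. -/
/-!
The two matrices are `q + e` and `q + f` with `e = [[0, 0], [1, 0]]` and `f = [[0, 1], [0, 0]]`.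
Then `e² = f² = 0` and `e f + f e = 1`, and these relations give
`r = q² (e - f) (a - b)` whenever `r = (q + e) a = (q + f) b` and `q` commutes with `e` and `f`.
A common right multiple of the two matrices is therefore a multiple of `q²`, and its determinant
one of `(q²)² = q⁴`.
-/

theorem IsRightMultiple.dvd {D : ℕ} {A M : Matrix (Fin D) (Fin D) ℤ} (h : IsRightMultiple A M) :
    M ∣ A := by
  obtain ⟨P, -, rfl⟩ := h
  exact dvd_mul_right M P

theorem sq_dvd_of_add_dvd_of_add_dvd {A : Type*} [Ring A] {q e f r : A}
    (hqe : Commute q e) (hqf : Commute q f) (he : e * e = 0) (hf : f * f = 0)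
    (hef : e * f + f * e = 1) (hre : q + e ∣ r) (hrf : q + f ∣ r) : q ^ 2 ∣ r := by
  obtain ⟨a, ha⟩ := hre
  obtain ⟨b, hb⟩ := hrf
  have er : e * r = q * (e * a) := by
    rw [ha, ← mul_assoc, mul_add, he, add_zero, ← hqe.eq, mul_assoc]
  have fr : f * r = q * (f * b) := by
    rw [hb, ← mul_assoc, mul_add, hf, add_zero, ← hqf.eq, mul_assoc]
  have ea : e * a = r - q * a := by rw [ha, add_mul, add_sub_cancel_left]
  have fb : f * b = r - q * b := by rw [hb, add_mul, add_sub_cancel_left]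
  have cross : e * (f * b) + f * (e * a) = q * ((e - f) * (a - b)) := by
    rw [fb, ea, mul_sub, mul_sub, er, fr, hqe.symm.left_comm, hqf.symm.left_comm]
    noncomm_ring
  refine ⟨(e - f) * (a - b), ?_⟩
  calc
    r = e * (f * r) + f * (e * r) := by rw [← mul_assoc, ← mul_assoc, ← add_mul, hef, one_mul]
    _ = q * (e * (f * b) + f * (e * a)) := by
      rw [fr, er, hqe.symm.left_comm, hqf.symm.left_comm, mul_add]
    _ = q ^ 2 * ((e - f) * (a - b)) := by rw [cross, sq, mul_assoc]

theorem pow_dvd_det_of_scalar_add_dvd {n K : Type*} [Fintype n] [DecidableEq n] [CommRing K]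
    {q : K} {e f R : Matrix n n K} (he : e * e = 0) (hf : f * f = 0) (hef : e * f + f * e = 1)
    (hRe : Matrix.scalar n q + e ∣ R) (hRf : Matrix.scalar n q + f ∣ R) :
    q ^ (2 * Fintype.card n) ∣ R.det := by
  have hR : Matrix.scalar n q ^ 2 ∣ R :=
    sq_dvd_of_add_dvd_of_add_dvd (Matrix.scalar_commute q (Commute.all q) e)
      (Matrix.scalar_commute q (Commute.all q) f) he hf hef hRe hRf
  have hdet : (Matrix.scalar n q ^ 2).det = q ^ (2 * Fintype.card n) := by
    rw [Matrix.det_pow, Matrix.scalar_apply, Matrix.det_diagonal, Finset.prod_const,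
      Finset.card_univ, ← pow_mul, mul_comm]
  exact hdet ▸ map_dvd Matrix.detMonoidHom hR

theorem stmt_10_general {K : Type*} [CommRing K] {q : K} {R : Matrix (Fin 2) (Fin 2) K}
    (h1 : !![q, 0; 1, q] ∣ R) (h2 : !![q, 1; 0, q] ∣ R) : q ^ 4 ∣ R.det := by
  have lower : !![q, 0; 1, q] = Matrix.scalar (Fin 2) q + !![0, 0; 1, 0] := by
    ext i j; fin_cases i <;> fin_cases j <;> simp
  have upper : !![q, 1; 0, q] = Matrix.scalar (Fin 2) q + !![0, 1; 0, 0] := by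
    ext i j; fin_cases i <;> fin_cases j <;> simp
  rw [lower] at h1
  rw [upper] at h2
  refine pow_dvd_det_of_scalar_add_dvd ?_ ?_ ?_ h1 h2 <;>
    simp [Matrix.one_fin_two, ← Matrix.ext_iff]

/-- every nonsingular common right multiple `R` of
`M1 = [[q,0],[1,q]]` and `M2 = [[q,1],[0,q]]` satisfies `q⁴ ∣ det R`, and in
particular `|det R| ≥ q⁴`. -/
theorem stmt_10 (q : ℤ) (hq : 1 < q) (R : Matrix (Fin 2) (Fin 2) ℤ)
    (hR : R.det ≠ 0)
    (h1 : IsRightMultiple R !![q, 0; 1, q])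
    (h2 : IsRightMultiple R !![q, 1; 0, q]) :
    q ^ 4 ∣ R.det ∧ q ^ 4 ≤ |R.det| := by
  have hdvd : q ^ 4 ∣ R.det := stmt_10_general h1.dvd h2.dvd
  exact ⟨hdvd, Int.le_of_dvd (abs_pos.mpr hR) ((dvd_abs _ _).mpr hdvd)⟩
end

section
/- Let q_1 < q_2 < ⋯ < q_L be pairwise coprime positive integers with q_1 > 1, and let R_2 = (q_1·q_2⋯q_L)² · I be the 2×2 scalar integer matrix with diagonal entries (q_1·q_2⋯q_L)². Then R_2 is a least common right multiple of the 2L matrices M_{i,1} = [[q_i, 0], [1, q_i]] and M_{i,2} = [[q_i, 1], [0, q_i]], 1 ≤ i ≤ L: R_2 is a common right multiple of all of them, and every nonsingular 2×2 integer matrix that is a common right multiple of all of them is a right multiple of R_2. -/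
theorem dvd_of_mul_eq_of_isUnit_sub {S : Type*} [Ring S] {a a' b b' c r : S}
    (hc : Commute c (a' - b')) (ha : a' * a = c) (hb : b' * b = c) (hunit : IsUnit (a' - b'))
    (har : a ∣ r) (hbr : b ∣ r) : c ∣ r := by
  obtain ⟨u, hu⟩ := hunit
  rw [← hu] at hc
  obtain ⟨x, hx⟩ := har
  obtain ⟨y, hy⟩ := hbr
  have hur : u * r = c * (x - y) := by
    calc u * r = a' * r - b' * r := by rw [hu, sub_mul]
      _ = a' * (a * x) - b' * (b * y) := by rw [← hx, ← hy]
      _ = c * (x - y) := by rw [← mul_assoc, ← mul_assoc, ha, hb, mul_sub]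
  refine ⟨↑u⁻¹ * (x - y), ?_⟩
  rw [← mul_assoc, hc.units_inv_right.eq, mul_assoc, ← hur, Units.inv_mul_cancel_left]

section Matrix

variable {n R : Type*} [Fintype n] [DecidableEq n] [CommRing R] {A B M : Matrix n n R}

theorem smul_one_dvd_iff_forall_dvd_apply {c : R} :
    c • (1 : Matrix n n R) ∣ M ↔ ∀ i j, c ∣ M i j := by
  constructor
  · rintro ⟨P, rfl⟩ i j
    exact ⟨P i j, by simp⟩
  · intro h
    choose P hP using h
    exact ⟨Matrix.of P, by ext i j; simp [hP]⟩

theorem dvd_smul_one_of_det_dvd {c : R} (h : A.det ∣ c) : A ∣ c • (1 : Matrix n n R) := by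
  obtain ⟨k, rfl⟩ := h
  exact ⟨k • A.adjugate, by rw [Matrix.mul_smul, A.mul_adjugate, smul_smul, mul_comm]⟩

theorem det_smul_one_dvd_of_isUnit_adjugate_sub (hdet : A.det = B.det)
    (hunit : IsUnit (A.adjugate - B.adjugate)) (hA : A ∣ M) (hB : B ∣ M) :
    A.det • (1 : Matrix n n R) ∣ M :=
  dvd_of_mul_eq_of_isUnit_sub ((Commute.one_left _).smul_left _) A.adjugate_mul
    (hdet ▸ B.adjugate_mul) hunit hA hB

theorem prod_smul_one_dvd_of_pairwise_isCoprime {ι : Type*} [Fintype ι] {d : ι → R}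
    (hcop : Pairwise fun i j => IsCoprime (d i) (d j))
    (hd : ∀ i, d i • (1 : Matrix n n R) ∣ M) : (∏ i, d i) • (1 : Matrix n n R) ∣ M :=
  smul_one_dvd_iff_forall_dvd_apply.2 fun k l =>
    Finset.prod_dvd_of_coprime (hcop.set_pairwise _) fun i _ =>
      smul_one_dvd_iff_forall_dvd_apply.1 (hd i) k l

theorem isUnit_adjugate_sub_adjugate_jordanBlock (q : R) :
    IsUnit ((!![q, 0; 1, q]).adjugate - (!![q, 1; 0, q]).adjugate) := by
  rw [Matrix.isUnit_iff_isUnit_det]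
  simp [Matrix.adjugate_fin_two_of, Matrix.det_fin_two]

end Matrix

theorem stmt_12_general {D : ℕ} {ι : Type*} [Fintype ι] {A B : ι → Matrix (Fin D) (Fin D) ℤ}
    (hA : ∀ i, (A i).det ≠ 0) (hdet : ∀ i, (A i).det = (B i).det)
    (hunit : ∀ i, IsUnit ((A i).adjugate - (B i).adjugate))
    (hcop : Pairwise fun i j => IsCoprime (A i).det (A j).det) :
    (∀ i, IsRightMultiple ((∏ i, (A i).det) • (1 : Matrix (Fin D) (Fin D) ℤ)) (A i) ∧
      IsRightMultiple ((∏ i, (A i).det) • (1 : Matrix (Fin D) (Fin D) ℤ)) (B i)) ∧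
    ∀ R : Matrix (Fin D) (Fin D) ℤ, R.det ≠ 0 →
      (∀ i, IsRightMultiple R (A i) ∧ IsRightMultiple R (B i)) →
      IsRightMultiple R ((∏ i, (A i).det) • (1 : Matrix (Fin D) (Fin D) ℤ)) := by
  have hprod : ((∏ i, (A i).det) • (1 : Matrix (Fin D) (Fin D) ℤ)).det ≠ 0 := by
    rw [Matrix.det_smul, Matrix.det_one, mul_one]
    exact pow_ne_zero _ (Finset.prod_ne_zero_iff.2 fun i _ => hA i)
  have hdvd (i : ι) : (A i).det ∣ ∏ i, (A i).det := Finset.dvd_prod_of_mem _ (Finset.mem_univ i)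
  refine ⟨fun i => ?_, fun R hR h => ?_⟩
  · rw [isRightMultiple_iff_dvd hprod, isRightMultiple_iff_dvd hprod]
    exact ⟨dvd_smul_one_of_det_dvd (hdvd i), dvd_smul_one_of_det_dvd (hdet i ▸ hdvd i)⟩
  · simp only [isRightMultiple_iff_dvd hR] at h ⊢
    exact prod_smul_one_dvd_of_pairwise_isCoprime hcop fun i =>
      det_smul_one_dvd_of_isUnit_adjugate_sub (hdet i) (hunit i) (h i).1 (h i).2

/-- `R_2 = (q_1⋯q_L)² • I` is a least common right multiple of the
`2L` matrices `M_{i,1} = [[q_i,0],[1,q_i]]` and `M_{i,2} = [[q_i,1],[0,q_i]]`. -/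
theorem stmt_12 (L : ℕ) (hL : 1 ≤ L) (q : Fin L → ℤ) (hmono : StrictMono q)
    (hpos : ∀ i, 0 < q i) (hq1 : 1 < q ⟨0, hL⟩)
    (hcop : ∀ i i' : Fin L, i ≠ i' → IsCoprime (q i) (q i')) :
    (∀ i : Fin L,
      IsRightMultiple (((∏ i, q i) ^ 2) • (1 : Matrix (Fin 2) (Fin 2) ℤ))
        !![q i, 0; 1, q i] ∧
      IsRightMultiple (((∏ i, q i) ^ 2) • (1 : Matrix (Fin 2) (Fin 2) ℤ))
        !![q i, 1; 0, q i]) ∧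
    ∀ R : Matrix (Fin 2) (Fin 2) ℤ, R.det ≠ 0 →
      (∀ i : Fin L,
        IsRightMultiple R !![q i, 0; 1, q i] ∧ IsRightMultiple R !![q i, 1; 0, q i]) →
      IsRightMultiple R (((∏ i, q i) ^ 2) • (1 : Matrix (Fin 2) (Fin 2) ℤ)) := by
  simpa [Matrix.det_fin_two_of, ← sq, Finset.prod_pow] using
    stmt_12_general (A := fun i => !![q i, 0; 1, q i]) (B := fun i => !![q i, 1; 0, q i])
      (fun i => by simp [Matrix.det_fin_two_of, (hpos i).ne'])
      (fun i => by simp [Matrix.det_fin_two_of])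
      (fun i => isUnit_adjugate_sub_adjugate_jordanBlock (q i))
      (fun i j hij => by simpa [Matrix.det_fin_two_of, ← sq] using (hcop i j hij).pow)
end

section
/- (Minimality of the constructed family, two-dimensional case.) Let q_1 < q_2 < ⋯ < q_L be pairwise coprime positive integers with q_1 > 1, and consider the 2L matrices M_{i,1} = [[q_i, 0], [1, q_i]] and M_{i,2} = [[q_i, 1], [0, q_i]], 1 ≤ i ≤ L. For any choice of indices i_0 ∈ {1,…,L} and j_0 ∈ {1,2}, there exists a nonsingular 2×2 integer matrix A that is a common right multiple of the remaining 2L−1 matrices {M_{i,j} : (i,j) ≠ (i_0,j_0)} and satisfies |det A| < (q_1·q_2⋯q_L)⁴. In particular, any least common right multiple of the remaining 2L−1 matrices has determinant absolute value strictly smaller than (q_1·q_2⋯q_L)⁴ = |det R_2|. -/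
/-- The family of `2 × 2` matrices: `M_{i,1} = [[q_i, 0], [1, q_i]]` and
`M_{i,2} = [[q_i, 1], [0, q_i]]` (here `j = 0` encodes `j = 1`, `j = 1` encodes `j = 2`). -/
def M2fam {L : ℕ} (q : Fin L → ℤ) (i : Fin L) (j : Fin 2) : Matrix (Fin 2) (Fin 2) ℤ :=
  if j = 0 then !![q i, 0; 1, q i] else !![q i, 1; 0, q i]

/-!
By Cramer's rule a matrix `M` left-divides the scalar matrix `det M`. With `K = ∏_{i ≠ i₀} q_i`,
the scalar `K²` is therefore a right multiple of both matrices at every index `i ≠ i₀`, so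
multiplying it by the one matrix that survives at `i₀` gives a common right multiple of the
remaining family, of determinant `K⁴ q_{i₀}² = (∏ q_i)⁴ / q_{i₀}²`.
-/

theorem matrix_dvd_smul_of_det_dvd {R n : Type*} [CommRing R] [Fintype n] [DecidableEq n]
    {M : Matrix n n R} {c : R} (h : M.det ∣ c) (N : Matrix n n R) : M ∣ c • N := by
  obtain ⟨d, rfl⟩ := h
  refine ⟨M.adjugate * (d • N), ?_⟩
  rw [← mul_assoc, M.mul_adjugate, smul_one_mul, mul_smul]

section IsRightMultiple

variable {D : ℕ} {A M : Matrix (Fin D) (Fin D) ℤ}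

theorem isRightMultiple_of_dvd (hA : A.det ≠ 0) (h : M ∣ A) : IsRightMultiple A M := by
  obtain ⟨P, rfl⟩ := h
  rw [Matrix.det_mul] at hA
  exact ⟨P, right_ne_zero_of_mul hA, rfl⟩

theorem IsRightMultiple.abs_det_le (h : IsRightMultiple A M) : |M.det| ≤ |A.det| := by
  obtain ⟨P, hP, rfl⟩ := h
  rw [Matrix.det_mul, abs_mul]
  exact le_mul_of_one_le_right (abs_nonneg _) (Int.one_le_abs hP)

end IsRightMultiple

section M2fam

variable {L : ℕ} (q : Fin L → ℤ)

theorem det_M2fam (i : Fin L) (j : Fin 2) : (M2fam q i j).det = q i ^ 2 := by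
  unfold M2fam
  split_ifs <;> simp [Matrix.det_fin_two_of, sq]

/-- A common right multiple of the family `M2fam q` with its `(i₀, j₀)` member removed: the other
matrix at the index `i₀`, scaled by the square of the product of the `q i` with `i ≠ i₀`.
Reversal `Fin.rev` swaps the two elements of `Fin 2`. -/
def puncturedMultiple (i₀ : Fin L) (j₀ : Fin 2) : Matrix (Fin 2) (Fin 2) ℤ :=
  (∏ i ∈ Finset.univ.erase i₀, q i) ^ 2 • M2fam q i₀ j₀.rev

theorem M2fam_dvd_puncturedMultiple {i i₀ : Fin L} {j j₀ : Fin 2} (h : (i, j) ≠ (i₀, j₀)) :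
    M2fam q i j ∣ puncturedMultiple q i₀ j₀ := by
  rcases eq_or_ne i i₀ with rfl | hi
  · obtain rfl : j = j₀.rev := by
      have hj : j ≠ j₀ := fun hj => h (by rw [hj])
      clear h
      decide +revert
    exact dvd_smul_of_dvd _ dvd_rfl
  · refine matrix_dvd_smul_of_det_dvd ?_ _
    rw [det_M2fam]
    exact pow_dvd_pow_of_dvd
      (Finset.dvd_prod_of_mem q (Finset.mem_erase.2 ⟨hi, Finset.mem_univ i⟩)) 2

theorem sq_mul_det_puncturedMultiple (i₀ : Fin L) (j₀ : Fin 2) :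
    q i₀ ^ 2 * (puncturedMultiple q i₀ j₀).det = (∏ i, q i) ^ 4 := by
  rw [puncturedMultiple, Matrix.det_smul, det_M2fam, Fintype.card_fin,
    ← Finset.mul_prod_erase Finset.univ q (Finset.mem_univ i₀)]
  ring

variable {q}

theorem det_puncturedMultiple_ne_zero (hq : ∀ i, q i ≠ 0) (i₀ : Fin L) (j₀ : Fin 2) :
    (puncturedMultiple q i₀ j₀).det ≠ 0 := by
  have hprod : (∏ i, q i) ^ 4 ≠ 0 := pow_ne_zero 4 (Finset.prod_ne_zero_iff.2 fun i _ => hq i)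
  rw [← sq_mul_det_puncturedMultiple q i₀ j₀] at hprod
  exact right_ne_zero_of_mul hprod

theorem abs_det_puncturedMultiple_lt (hq : ∀ i, q i ≠ 0) {i₀ : Fin L} (hi₀ : 1 < |q i₀|)
    (j₀ : Fin 2) : |(puncturedMultiple q i₀ j₀).det| < (∏ i, q i) ^ 4 :=
  calc |(puncturedMultiple q i₀ j₀).det|
      < q i₀ ^ 2 * |(puncturedMultiple q i₀ j₀).det| :=
        lt_mul_of_one_lt_left (abs_pos.2 (det_puncturedMultiple_ne_zero hq i₀ j₀))
          ((one_lt_sq_iff_one_lt_abs _).2 hi₀)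
    _ = |q i₀ ^ 2 * (puncturedMultiple q i₀ j₀).det| := by rw [abs_mul, abs_sq]
    _ = (∏ i, q i) ^ 4 := by
        rw [sq_mul_det_puncturedMultiple, abs_of_nonneg (by positivity)]

end M2fam

theorem stmt_16_general {L : ℕ} {q : Fin L → ℤ} (hq : ∀ i, q i ≠ 0) {i₀ : Fin L}
    (hi₀ : 1 < |q i₀|) (j₀ : Fin 2) :
    (∃ A : Matrix (Fin 2) (Fin 2) ℤ, A.det ≠ 0 ∧
      (∀ (i : Fin L) (j : Fin 2), (i, j) ≠ (i₀, j₀) → IsRightMultiple A (M2fam q i j)) ∧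
      |A.det| < (∏ i, q i) ^ 4) ∧
    ∀ R : Matrix (Fin 2) (Fin 2) ℤ, R.det ≠ 0 →
      (∀ (i : Fin L) (j : Fin 2), (i, j) ≠ (i₀, j₀) → IsRightMultiple R (M2fam q i j)) →
      (∀ R' : Matrix (Fin 2) (Fin 2) ℤ, R'.det ≠ 0 →
        (∀ (i : Fin L) (j : Fin 2), (i, j) ≠ (i₀, j₀) → IsRightMultiple R' (M2fam q i j)) →
        IsRightMultiple R' R) →
      |R.det| < (∏ i, q i) ^ 4 := by
  have hdet := det_puncturedMultiple_ne_zero hq i₀ j₀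
  have hcrm (i : Fin L) (j : Fin 2) (hij : (i, j) ≠ (i₀, j₀)) :
      IsRightMultiple (puncturedMultiple q i₀ j₀) (M2fam q i j) :=
    isRightMultiple_of_dvd hdet (M2fam_dvd_puncturedMultiple q hij)
  have hlt := abs_det_puncturedMultiple_lt hq hi₀ j₀
  exact ⟨⟨_, hdet, hcrm, hlt⟩,
    fun R _ _ hleast => (hleast _ hdet hcrm).abs_det_le.trans_lt hlt⟩

/-- removing any one matrix from the constructed two-dimensional
family yields a family possessing a nonsingular common right multiple `A` with
`|det A| < (q_1⋯q_L)⁴`; in particular every least common right multiple of the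
remaining `2L - 1` matrices has determinant absolute value `< (q_1⋯q_L)⁴`. -/
theorem stmt_16 (L : ℕ) (hL : 1 ≤ L) (q : Fin L → ℤ) (hmono : StrictMono q)
    (hpos : ∀ i, 0 < q i) (hq1 : 1 < q ⟨0, hL⟩)
    (hcop : ∀ i i' : Fin L, i ≠ i' → IsCoprime (q i) (q i'))
    (i₀ : Fin L) (j₀ : Fin 2) :
    (∃ A : Matrix (Fin 2) (Fin 2) ℤ, A.det ≠ 0 ∧
      (∀ (i : Fin L) (j : Fin 2), (i, j) ≠ (i₀, j₀) → IsRightMultiple A (M2fam q i j)) ∧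
      |A.det| < (∏ i, q i) ^ 4) ∧
    ∀ R : Matrix (Fin 2) (Fin 2) ℤ, R.det ≠ 0 →
      (∀ (i : Fin L) (j : Fin 2), (i, j) ≠ (i₀, j₀) → IsRightMultiple R (M2fam q i j)) →
      (∀ R' : Matrix (Fin 2) (Fin 2) ℤ, R'.det ≠ 0 →
        (∀ (i : Fin L) (j : Fin 2), (i, j) ≠ (i₀, j₀) → IsRightMultiple R' (M2fam q i j)) →
        IsRightMultiple R' R) →
      |R.det| < (∏ i, q i) ^ 4 := by
  have hi₀ : 1 < q i₀ := hq1.trans_le (hmono.monotone (Fin.mk_le_of_le_val (Nat.zero_le _)))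
  exact stmt_16_general (fun i => (hpos i).ne') (hi₀.trans_le (le_abs_self _)) j₀
end
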